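/- Let γ > 0, B_z > 0, B⊥ > 0, set ω = ω₀ = 2B_z (resonance, so δ = 0 and B_z − ω/2 = 0), and let |Φ|² ≥ 0. Consider angles θ₀, φ₀ satisfying the fixed-point equations −B⊥·cos θ₀·cos φ₀ = 0 and γB_z·sin θ₀ + B⊥·sin φ₀ = 0, and define the Ponderomotive potential V_P = |Φ|²·[(B_z − ω/2)·(1 − cos θ₀) − B⊥·sin θ₀·cos φ₀] = −|Φ|²·B⊥·sin θ₀·cos φ₀. Then: (i) if B⊥ ≤ γB_z and sin θ₀ = B⊥/(γB_z) with cos θ₀ ≠ 0, the equations force sin φ₀ = −1, hence cos φ₀ = 0 and V_P = 0; (ii) if B⊥ > γB_z and sin θ₀ = 1 (so cos θ₀ = 0), then sin φ₀ = −γB_z/B⊥, cos φ₀ = ±√(1 − γ²B_z²/B⊥²), and V_P = ∓|Φ|²·√(B⊥² − γ²B_z²). In particular, for B⊥ > γB_z one stationary solution has strictly negative Ponderomotive potential V_P = −|Φ|²·√(B⊥² − γ²B_z²). -/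

import Mathlib

/-- At resonance (`ω = ω₀ = 2B_z`), for fixed points of the driven damped
spin: (i) if `B⊥ ≤ γB_z` and `sin θ₀ = B⊥/(γB_z)` with `cos θ₀ ≠ 0` then `sin φ₀ = −1`,
`cos φ₀ = 0` and `V_P = 0`; (ii) if `B⊥ > γB_z` and `sin θ₀ = 1` then `cos θ₀ = 0`,
`sin φ₀ = −γB_z/B⊥`, `cos φ₀ = ±√(1 − γ²B_z²/B⊥²)` and `V_P = ∓|Φ|²√(B⊥² − γ²B_z²)`;
in particular for `B⊥ > γB_z` there is a stationary solution with
`V_P = −|Φ|²√(B⊥² − γ²B_z²)`. -/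
theorem stmt_13 (γ Bz B Φ2 : ℝ) (hγ : 0 < γ) (hBz : 0 < Bz) (hB : 0 < B)
    (hΦ : 0 ≤ Φ2) (ω : ℝ) (hω : ω = 2 * Bz)
    (θ₀ φ₀ : ℝ)
    (h1 : -B * Real.cos θ₀ * Real.cos φ₀ = 0)
    (h2 : γ * Bz * Real.sin θ₀ + B * Real.sin φ₀ = 0) :
    let VP : ℝ := Φ2 * ((Bz - ω / 2) * (1 - Real.cos θ₀) - B * Real.sin θ₀ * Real.cos φ₀)
    VP = -Φ2 * B * Real.sin θ₀ * Real.cos φ₀ ∧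
    (B ≤ γ * Bz → Real.sin θ₀ = B / (γ * Bz) → Real.cos θ₀ ≠ 0 →
      Real.sin φ₀ = -1 ∧ Real.cos φ₀ = 0 ∧ VP = 0) ∧
    (γ * Bz < B → Real.sin θ₀ = 1 →
      Real.cos θ₀ = 0 ∧ Real.sin φ₀ = -(γ * Bz / B) ∧
      ((Real.cos φ₀ = Real.sqrt (1 - γ ^ 2 * Bz ^ 2 / B ^ 2) ∧
          VP = -Φ2 * Real.sqrt (B ^ 2 - γ ^ 2 * Bz ^ 2)) ∨
        (Real.cos φ₀ = -Real.sqrt (1 - γ ^ 2 * Bz ^ 2 / B ^ 2) ∧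
          VP = Φ2 * Real.sqrt (B ^ 2 - γ ^ 2 * Bz ^ 2)))) ∧
    (γ * Bz < B → ∃ θ φ : ℝ,
      -B * Real.cos θ * Real.cos φ = 0 ∧
      γ * Bz * Real.sin θ + B * Real.sin φ = 0 ∧
      Φ2 * ((Bz - ω / 2) * (1 - Real.cos θ) - B * Real.sin θ * Real.cos φ) =
        -Φ2 * Real.sqrt (B ^ 2 - γ ^ 2 * Bz ^ 2)) := by
  subst hω
  have hg : 0 < γ * Bz := mul_pos hγ hBz
  have key : B * Real.sqrt (1 - γ ^ 2 * Bz ^ 2 / B ^ 2)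
      = Real.sqrt (B ^ 2 - γ ^ 2 * Bz ^ 2) := by
    have e : B ^ 2 - γ ^ 2 * Bz ^ 2 = B ^ 2 * (1 - γ ^ 2 * Bz ^ 2 / B ^ 2) := by
      field_simp
    rw [e, Real.sqrt_mul (sq_nonneg B), Real.sqrt_sq hB.le]
  intro VP
  have hVP : VP = -Φ2 * B * Real.sin θ₀ * Real.cos φ₀ := by
    simp only [VP]; ring
  refine ⟨hVP, ?_, ?_, ?_⟩
  · intro _ hs hc
    have hcos : Real.cos φ₀ = 0 := by
      rcases mul_eq_zero.mp h1 with h | h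
      · rcases mul_eq_zero.mp h with h | h
        · linarith
        · exact absurd h hc
      · exact h
    refine ⟨?_, hcos, by rw [hVP, hcos, mul_zero]⟩
    rw [hs, mul_div_cancel₀ _ hg.ne'] at h2
    apply mul_left_cancel₀ hB.ne'
    linarith
  · intro hlt hs
    have hc : Real.cos θ₀ = 0 := by
      have := Real.sin_sq_add_cos_sq θ₀
      rw [hs] at this
      exact pow_eq_zero_iff (two_ne_zero) |>.mp (by linarith)
    have hsp : Real.sin φ₀ = -(γ * Bz / B) := by
      rw [hs] at h2
      field_simp
      linarith
    refine ⟨hc, hsp, ?_⟩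
    have hsq : Real.cos φ₀ ^ 2 = 1 - γ ^ 2 * Bz ^ 2 / B ^ 2 := by
      rw [Real.cos_sq', hsp]; ring
    have hab : Real.sqrt (1 - γ ^ 2 * Bz ^ 2 / B ^ 2) = |Real.cos φ₀| := by
      rw [← hsq, Real.sqrt_sq_eq_abs]
    rw [hVP, ← key, hab, hs]
    rcases abs_choice (Real.cos φ₀) with h | h
    · left; rw [h]; exact ⟨rfl, by ring⟩
    · right; rw [h]; exact ⟨by ring, by ring⟩
  · intro hlt
    have hle : γ * Bz / B ≤ 1 := (div_le_one hB).mpr hlt.le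
    have hnn : 0 ≤ γ * Bz / B := by positivity
    refine ⟨Real.pi / 2, Real.arcsin (-(γ * Bz / B)), by simp, ?_, ?_⟩
    · rw [Real.sin_pi_div_two, Real.sin_arcsin (by linarith) (by linarith)]
      field_simp
      ring
    · have e : 1 - (-(γ * Bz / B)) ^ 2 = 1 - γ ^ 2 * Bz ^ 2 / B ^ 2 := by ring
      rw [Real.sin_pi_div_two, Real.cos_arcsin, e, ← key]
      ring
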